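/- arXiv:2206.02953 — 2 statements merged into one kernel-verified Lean document; each statement's English description precedes it below -/
import Mathlib

section
/- Let E be a real inner product space, n ≥ 2, and v₁, …, vₙ ∈ E with sample mean m = (1/n)·Σⱼ₌₁ⁿ vⱼ and sample variance σ² = (1/n)·Σⱼ₌₁ⁿ ‖vⱼ − m‖². For any i with 1 ≤ i ≤ n, averaging over all n! permutations τ of {1,…,n}: (1/n!)·Σ_τ (1/i)·Σⱼ₌₁ⁱ v_{τ(j)} = m, and (1/n!)·Σ_τ ‖(1/i)·Σⱼ₌₁ⁱ v_{τ(j)} − m‖² = ((n−i)/(n−1))·(σ²/i). -/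
/-!
The identities hold for averages over any finite group `G` acting doubly transitively on the index
set. Transitivity makes every `g • j` uniformly distributed, which gives the mean. For the variance,
centre the family: double transitivity makes all pairs of distinct entries equally correlated, and
since the centred entries sum to zero, this common covariance is `-1 / (N - 1)` times the variance
of one entry, where `N` is the number of indices. Expanding the square of a sum over `s` and adding
up `#s` variances and `#s * (#s - 1)` covariances leaves the factor `(N - #s) / (N - 1)`.
-/

open Finset MulAction

section GroupSums

variable {G α M : Type*} [Group G] [Fintype G] [MulAction G α] [AddCommMonoid M]

theorem sum_smul_eq_of_mem_orbit (f : α → M) {a b : α} (h : a ∈ orbit G b) :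
    ∑ g : G, f (g • a) = ∑ g : G, f (g • b) := by
  obtain ⟨c, rfl⟩ := h
  exact Fintype.sum_equiv (Equiv.mulRight c) _ _ fun g => congrArg f (smul_smul g c b)

theorem card_nsmul_sum_smul [Fintype α] [IsPretransitive G α] (f : α → M) (a : α) :
    Fintype.card α • ∑ g : G, f (g • a) = Fintype.card G • ∑ b, f b := by
  calc
    Fintype.card α • ∑ g : G, f (g • a) = ∑ b, ∑ g : G, f (g • b) := by
      rw [sum_congr rfl fun b _ => sum_smul_eq_of_mem_orbit f (orbit_eq_univ G a ▸ Set.mem_univ b),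
        sum_const, card_univ]
    _ = ∑ g : G, ∑ b, f (g • b) := sum_comm
    _ = ∑ _g : G, ∑ b, f b := sum_congr rfl fun g _ => Equiv.sum_comp (toPerm g) f
    _ = Fintype.card G • ∑ b, f b := by rw [sum_const, card_univ]

theorem sum_smul_smul_eq_of_ne [IsMultiplyPretransitive G α 2] (F : α → α → M) {a b c d : α}
    (hab : a ≠ b) (hcd : c ≠ d) :
    ∑ g : G, F (g • a) (g • b) = ∑ g : G, F (g • c) (g • d) := by
  obtain ⟨g, rfl, rfl⟩ := is_two_pretransitive_iff.1 ‹IsMultiplyPretransitive G α 2› hcd hab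
  exact sum_smul_eq_of_mem_orbit (fun p : α × α => F p.1 p.2) (mem_orbit (c, d) g)

end GroupSums

section FiniteSums

variable {ι : Type*} {s : Finset ι}

theorem sum_eq_add_card_sub_one_mul {R : Type*} [Ring R] {f : ι → R} {j : ι} {c : R} (hj : j ∈ s)
    (hf : ∀ k ∈ s, k ≠ j → f k = c) :
    ∑ k ∈ s, f k = f j + (#s - 1) * c := by
  classical
  have hrest : ∑ k ∈ s.erase j, f k = #(s.erase j) • c :=
    sum_eq_card_nsmul fun k hk => hf k (mem_of_mem_erase hk) (ne_of_mem_erase hk)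
  rw [← add_sum_erase s f hj, hrest, nsmul_eq_mul, cast_card_erase_of_mem hj]

theorem inv_card_smul_sum_sub_const {K E : Type*} [DivisionRing K] [CharZero K] [AddCommGroup E]
    [Module K E] (hs : s.Nonempty) (f : ι → E) (c : E) :
    (#s : K)⁻¹ • ∑ j ∈ s, (f j - c) = (#s : K)⁻¹ • ∑ j ∈ s, f j - c := by
  have hs0 : (#s : K) ≠ 0 := Nat.cast_ne_zero.2 hs.card_ne_zero
  rw [sum_sub_distrib, sum_const, ← Nat.cast_smul_eq_nsmul K, smul_sub, inv_smul_smul₀ hs0]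

theorem sum_sub_mean_eq_zero {K E : Type*} [DivisionRing K] [CharZero K] [AddCommGroup E]
    [Module K E] (f : ι → E) :
    ∑ j ∈ s, (f j - (#s : K)⁻¹ • ∑ k ∈ s, f k) = 0 := by
  obtain rfl | hs := s.eq_empty_or_nonempty
  · exact sum_empty
  have hs0 : (#s : K) ≠ 0 := Nat.cast_ne_zero.2 hs.card_ne_zero
  rw [← smul_eq_zero_iff_right (inv_ne_zero hs0), inv_card_smul_sum_sub_const hs, sub_self]

theorem sum_norm_sum_sq_eq_sum_sum_sum_inner {κ E : Type*} [SeminormedAddCommGroup E]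
    [InnerProductSpace ℝ E] (t : Finset κ) (f : κ → ι → E) :
    ∑ g ∈ t, ‖∑ j ∈ s, f g j‖ ^ 2 = ∑ j ∈ s, ∑ k ∈ s, ∑ g ∈ t, inner ℝ (f g j) (f g k) := by
  simp_rw [← real_inner_self_eq_norm_sq, sum_inner, inner_sum]
  rw [sum_comm]
  exact sum_congr rfl fun j _ => sum_comm

end FiniteSums

theorem mean_sampleMean_smul {K G ι E : Type*} [DivisionRing K] [CharZero K] [Group G] [Fintype G]
    [Fintype ι] [MulAction G ι] [IsPretransitive G ι] [AddCommGroup E] [Module K E] (v : ι → E)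
    {s : Finset ι} (hs : s.Nonempty) :
    (Fintype.card G : K)⁻¹ • ∑ g : G, (#s : K)⁻¹ • ∑ j ∈ s, v (g • j) =
      (Fintype.card ι : K)⁻¹ • ∑ j, v j := by
  have : Nonempty ι := hs.to_type
  have hG : (Fintype.card G : K) ≠ 0 := Nat.cast_ne_zero.2 Fintype.card_ne_zero
  have hι : (Fintype.card ι : K) ≠ 0 := Nat.cast_ne_zero.2 Fintype.card_ne_zero
  have hs0 : (#s : K) ≠ 0 := Nat.cast_ne_zero.2 hs.card_ne_zero
  have hentry (j : ι) : ∑ g : G, v (g • j) =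
      (Fintype.card G : K) • (Fintype.card ι : K)⁻¹ • ∑ k, v k := by
    rw [← inv_smul_smul₀ hι (∑ g : G, v (g • j)), Nat.cast_smul_eq_nsmul K (Fintype.card ι),
      card_nsmul_sum_smul, ← Nat.cast_smul_eq_nsmul K, smul_smul, smul_smul, Nat.cast_comm]
  rw [← smul_sum, sum_comm, sum_congr rfl fun j _ => hentry j, sum_const,
    ← Nat.cast_smul_eq_nsmul K, inv_smul_smul₀ hs0, inv_smul_smul₀ hG]

section CenteredFamily

variable {G ι E : Type*} [Group G] [Fintype G] [Fintype ι] [MulAction G ι]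
  [IsMultiplyPretransitive G ι 2] [SeminormedAddCommGroup E] [InnerProductSpace ℝ E] {w : ι → E}

theorem card_sub_one_mul_sum_inner_smul (hw : ∑ k, w k = 0) {j k : ι} (hkj : k ≠ j) :
    ((Fintype.card ι : ℝ) - 1) * ∑ g : G, inner ℝ (w (g • j)) (w (g • k)) =
      -∑ g : G, ‖w (g • j)‖ ^ 2 := by
  have hequal (l : ι) (hlj : l ≠ j) : ∑ g : G, inner ℝ (w (g • j)) (w (g • l)) =
      ∑ g : G, inner ℝ (w (g • j)) (w (g • k)) :=
    sum_smul_smul_eq_of_ne (fun a b => inner ℝ (w a) (w b)) hlj.symm hkj.symm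
  have hzero : ∑ l, ∑ g : G, inner ℝ (w (g • j)) (w (g • l)) = 0 := by
    rw [sum_comm]
    refine sum_eq_zero fun g _ => ?_
    have hperm : ∑ l, w (g • l) = 0 := (Equiv.sum_comp (toPerm g) w).trans hw
    rw [← inner_sum, hperm, inner_zero_right]
  rw [sum_eq_add_card_sub_one_mul (mem_univ j) fun l _ => hequal l, card_univ] at hzero
  simp only [real_inner_self_eq_norm_sq] at hzero
  exact eq_neg_of_add_eq_zero_right hzero

theorem card_sub_one_mul_sum_norm_sum_smul_sq (hw : ∑ k, w k = 0) (s : Finset ι) :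
    ((Fintype.card ι : ℝ) - 1) * ∑ g : G, ‖∑ j ∈ s, w (g • j)‖ ^ 2 =
      ((Fintype.card ι : ℝ) - #s) * ∑ j ∈ s, ∑ g : G, ‖w (g • j)‖ ^ 2 := by
  have hrow (j : ι) (hj : j ∈ s) :
      ∑ k ∈ s, ((Fintype.card ι : ℝ) - 1) * ∑ g : G, inner ℝ (w (g • j)) (w (g • k)) =
        ((Fintype.card ι : ℝ) - #s) * ∑ g : G, ‖w (g • j)‖ ^ 2 := by
    rw [sum_eq_add_card_sub_one_mul hj fun k _ => card_sub_one_mul_sum_inner_smul hw]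
    simp only [real_inner_self_eq_norm_sq]
    ring
  rw [sum_norm_sum_sq_eq_sum_sum_sum_inner]
  simp only [mul_sum] at hrow ⊢
  exact sum_congr rfl hrow

theorem card_mul_card_sub_one_mul_sum_norm_sum_smul_sq (hw : ∑ k, w k = 0) (s : Finset ι) :
    (Fintype.card ι : ℝ) * ((Fintype.card ι : ℝ) - 1) * ∑ g : G, ‖∑ j ∈ s, w (g • j)‖ ^ 2 =
      Fintype.card G * (#s * ((Fintype.card ι : ℝ) - #s)) * ∑ k, ‖w k‖ ^ 2 := by
  have : IsPretransitive G ι := isPretransitive_of_is_two_pretransitive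
  have hentry (j : ι) :
      (Fintype.card ι : ℝ) * ∑ g : G, ‖w (g • j)‖ ^ 2 = Fintype.card G * ∑ k, ‖w k‖ ^ 2 := by
    simpa only [nsmul_eq_mul] using card_nsmul_sum_smul (fun k => ‖w k‖ ^ 2) j
  calc
    _ = ((Fintype.card ι : ℝ) - #s) * ∑ j ∈ s, (Fintype.card ι : ℝ) * ∑ g : G, ‖w (g • j)‖ ^ 2 := by
      rw [mul_assoc, card_sub_one_mul_sum_norm_sum_smul_sq hw, ← mul_sum, mul_left_comm]
    _ = ((Fintype.card ι : ℝ) - #s) * (#s * (Fintype.card G * ∑ k, ‖w k‖ ^ 2)) := by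
      rw [sum_congr rfl fun j _ => hentry j, sum_const, nsmul_eq_mul]
    _ = _ := by ring

end CenteredFamily

section SampleMean

variable {G ι E : Type*} [Group G] [Fintype G] [Fintype ι] [Nontrivial ι] [MulAction G ι]
  [IsMultiplyPretransitive G ι 2] [SeminormedAddCommGroup E] [InnerProductSpace ℝ E]

theorem variance_sampleMean_smul (v : ι → E) {s : Finset ι} (hs : s.Nonempty) {m : E}
    (hm : m = (Fintype.card ι : ℝ)⁻¹ • ∑ j, v j) :
    (Fintype.card G : ℝ)⁻¹ * ∑ g : G, ‖(#s : ℝ)⁻¹ • ∑ j ∈ s, v (g • j) - m‖ ^ 2 =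
      ((Fintype.card ι : ℝ) - #s) / ((Fintype.card ι : ℝ) - 1) *
        ((Fintype.card ι : ℝ)⁻¹ * (∑ j, ‖v j - m‖ ^ 2) / #s) := by
  have hG : (Fintype.card G : ℝ) ≠ 0 := Nat.cast_ne_zero.2 Fintype.card_ne_zero
  have hι : (Fintype.card ι : ℝ) ≠ 0 := Nat.cast_ne_zero.2 Fintype.card_ne_zero
  have hι1 : (Fintype.card ι : ℝ) - 1 ≠ 0 :=
    sub_ne_zero.2 (Nat.cast_ne_one.2 Fintype.one_lt_card.ne')
  have hs0 : (#s : ℝ) ≠ 0 := Nat.cast_ne_zero.2 hs.card_ne_zero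
  have hcentered : ∑ j, (v j - m) = 0 := by
    simpa only [hm, card_univ] using sum_sub_mean_eq_zero (K := ℝ) (s := univ) v
  have hdeviation (g : G) : ‖(#s : ℝ)⁻¹ • ∑ j ∈ s, v (g • j) - m‖ ^ 2 =
      (#s : ℝ)⁻¹ ^ 2 * ‖∑ j ∈ s, (v (g • j) - m)‖ ^ 2 := by
    rw [← inv_card_smul_sum_sub_const hs, norm_smul, mul_pow, Real.norm_eq_abs, sq_abs]
  have hmoment := card_mul_card_sub_one_mul_sum_norm_sum_smul_sq (G := G) hcentered s
  simp only [hdeviation, ← mul_sum]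
  field_simp
  linear_combination hmoment

theorem stmt_4_general (v : ι → E) {s : Finset ι} (hs : s.Nonempty) (m : E)
    (hm : m = (Fintype.card ι : ℝ)⁻¹ • ∑ j, v j) (σ2 : ℝ)
    (hσ2 : σ2 = (Fintype.card ι : ℝ)⁻¹ * ∑ j, ‖v j - m‖ ^ 2) :
    (Fintype.card G : ℝ)⁻¹ • ∑ g : G, (#s : ℝ)⁻¹ • ∑ j ∈ s, v (g • j) = m ∧
      (Fintype.card G : ℝ)⁻¹ * ∑ g : G, ‖(#s : ℝ)⁻¹ • ∑ j ∈ s, v (g • j) - m‖ ^ 2 =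
        ((Fintype.card ι : ℝ) - #s) / ((Fintype.card ι : ℝ) - 1) * (σ2 / #s) := by
  have : IsPretransitive G ι := isPretransitive_of_is_two_pretransitive
  exact ⟨(mean_sampleMean_smul v hs).trans hm.symm, hσ2 ▸ variance_sampleMean_smul v hs hm⟩

end SampleMean

/-- Mean and variance of without-replacement sample averages: averaging over all `n!`
permutations `τ` of `{1,…,n}`, the average of the first `i` of the `v_{τ(j)}` has mean `m`
(the sample mean) and mean squared deviation `((n−i)/(n−1))·(σ²/i)`. -/
theorem stmt_4
    {E : Type*} [NormedAddCommGroup E] [InnerProductSpace ℝ E]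
    (n : ℕ) (hn : 2 ≤ n) (v : Fin n → E) (i : ℕ) (hi1 : 1 ≤ i) (hin : i ≤ n)
    (m : E) (hm : m = (n : ℝ)⁻¹ • ∑ j, v j)
    (σ2 : ℝ) (hσ2 : σ2 = (n : ℝ)⁻¹ * ∑ j, ‖v j - m‖ ^ 2) :
    ((n.factorial : ℝ)⁻¹ • ∑ τ : Equiv.Perm (Fin n),
        (i : ℝ)⁻¹ • ∑ j ∈ Finset.filter (fun j : Fin n => (j : ℕ) < i) Finset.univ, v (τ j)) = m
    ∧ (n.factorial : ℝ)⁻¹ * ∑ τ : Equiv.Perm (Fin n),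
        ‖((i : ℝ)⁻¹ • ∑ j ∈ Finset.filter (fun j : Fin n => (j : ℕ) < i) Finset.univ, v (τ j)) - m‖ ^ 2
      = ((n : ℝ) - i) / ((n : ℝ) - 1) * (σ2 / i) := by
  have : Nontrivial (Fin n) := Fin.nontrivial_iff_two_le.2 hn
  have : IsMultiplyPretransitive (Equiv.Perm (Fin n)) (Fin n) 2 :=
    Equiv.Perm.isMultiplyPretransitive (Fin n) 2
  have hcard : #{j : Fin n | (j : ℕ) < i} = i := by rw [Fin.card_filter_val_lt, min_eq_right hin]
  have hs : ({j : Fin n | (j : ℕ) < i} : Finset (Fin n)).Nonempty := card_pos.1 (hcard.symm ▸ hi1)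
  simpa only [hcard, Fintype.card_perm, Fintype.card_fin, Equiv.Perm.smul_def] using
    stmt_4_general (G := Equiv.Perm (Fin n)) v hs m (by rwa [Fintype.card_fin]) σ2
      (by rwa [Fintype.card_fin])
end

section
/- Let E be a finite-dimensional real inner product space, n ≥ 1, and ω₁, …, ωₙ : E → E l-Lipschitz maps whose average ν = (1/n)·Σᵢ ωᵢ is μ-strongly monotone with 0 < μ ≤ l; let z* be the unique root of ν and σ*² = (1/n)·Σᵢ ‖ωᵢ(z*)‖². Fix z₀ ∈ E, K ≥ 1, and 0 < α ≤ μ/(5nl²). For each K-tuple τ = (τ₁, …, τ_K) of permutations of {1,…,n}, the proximal-point-without-replacement iterates are well defined (each implicit update zᵏᵢ = zᵏᵢ₋₁ − α·ω_{τₖ(i)}(zᵏᵢ) has a unique solution since αl < 1), and, averaging over all (n!)^K tuples (Random Reshuffling), (1/(n!)^K)·Σ_τ ‖z^{K+1}₀(τ) − z*‖² ≤ 2·e^{−nαμK}·‖z₀ − z*‖² + l²σ*²α³n²K/μ. -/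
open scoped RealInnerProductSpace

/-!
Let `t = nαμ`. Within an epoch each iterate differs from the last one `yₙ` by `α` times a tail sum
of operator values, and these tails are the tails of `ω_{π(i)}(z*)` up to Lipschitz errors. Hence
the epoch is one implicit step with `∑ᵢ ωᵢ`, evaluated at `yₙ`, up to an error controlled by
`S = ∑ᵢ ‖∑_{j > i} ω_{π(j)}(z*)‖`. Strong monotonicity and the step-size bound give
`(1 + 7t/8) ‖yₙ - z*‖ ≤ ‖y₀ - z*‖ + (5/4) α² l S`; squaring with Young's inequality leaves a
contraction by `e^{-t}` plus a multiple of `S²`.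

Because the `ωᵢ(z*)` sum to zero, sampling them without replacement makes distinct draws negatively
correlated, and the mean square of a sum over `m` positions is `m (n - m) / (n - 1) · σ*²`. This
bounds the mean noise of every epoch, and summing over `K` epochs gives the estimate.
-/

section

open Finset
open scoped BigOperators

section FinIoi

lemma sum_fin_card_Ioi {M : Type*} [AddCommMonoid M] (n : ℕ) (f : ℕ → M) :
    ∑ i : Fin n, f #(Ioi i) = ∑ k ∈ range n, f k := by
  simp_rw [Fin.card_Ioi]
  rw [Fin.sum_univ_eq_sum_range fun i ↦ f (n - 1 - i), sum_range_reflect]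

lemma sum_fin_card_Ioi_le (n : ℕ) : ∑ i : Fin n, (#(Ioi i) : ℝ) ≤ (n : ℝ) ^ 2 / 2 := by
  have hgauss : (∑ k ∈ range n, k) * 2 ≤ n ^ 2 := by
    rw [sum_range_id_mul_two, sq]
    exact Nat.mul_le_mul_left n (Nat.sub_le n 1)
  rw [sum_fin_card_Ioi n fun k ↦ (k : ℝ), le_div_iff₀ two_pos]
  rw [← Nat.cast_sum]
  exact_mod_cast hgauss

lemma sum_range_mul_sub (x : ℝ) (m : ℕ) :
    ∑ k ∈ range m, (k : ℝ) * (x - k) = m * (m - 1) * (3 * x - 2 * m + 1) / 6 := by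
  induction m with
  | zero => simp
  | succ m ih =>
    rw [sum_range_succ, ih]
    push_cast
    ring

lemma sum_fin_Ioi_sub_succ {G : Type*} [AddCommGroup G] {n : ℕ} (y : ℕ → G) (i : Fin n) :
    ∑ j ∈ Ioi i, (y j - y (j + 1)) = y (i + 1) - y n := by
  have hmap := sum_map (Ioi i) Fin.valEmbedding fun j ↦ y j - y (j + 1)
  have hIco : Ioo (i : ℕ) n = Ico (i + 1 : ℕ) n := rfl
  rw [Fin.map_valEmbedding_Ioi, hIco] at hmap
  simp_rw [Fin.valEmbedding_apply] at hmap
  rw [← hmap, ← neg_inj, ← sum_neg_distrib, neg_sub]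
  simp_rw [neg_sub]
  exact sum_Ico_sub y i.isLt

end FinIoi

section ScalarInequalities

/-- The contraction `e^{-t}` survives Young's inequality because
`1 + t / 2 ≤ (1 - t) (1 + 7 t / 8) ^ 2` for `t ≤ 1 / 5`. -/
lemma sq_le_exp_neg_mul_sq_add {x w A t : ℝ} (hx : 0 ≤ x) (ht : 0 < t) (ht5 : t ≤ 1 / 5)
    (h : (1 + 7 / 8 * t) * x ≤ w + A) :
    x ^ 2 ≤ Real.exp (-t) * w ^ 2 + 2 / t * A ^ 2 := by
  set q := (1 + 7 / 8 * t) ^ 2 with hq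
  have hq0 : 0 < q := by positivity
  have young : (w + A) ^ 2 ≤ (1 + t / 2) * w ^ 2 + (1 + 2 / t) * A ^ 2 := by
    have := two_mul_le_add_mul_sq (a := w) (b := A) (half_pos ht)
    rw [inv_div] at this
    linarith
  have hw : 1 + t / 2 ≤ Real.exp (-t) * q :=
    calc 1 + t / 2 ≤ (1 - t) * q := by
          nlinarith [mul_nonneg ht.le (sub_nonneg.2 ht5),
            mul_nonneg (mul_nonneg ht.le ht.le) (sub_nonneg.2 ht5)]
      _ ≤ Real.exp (-t) * q := by gcongr; exact Real.one_sub_le_exp_neg t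
  have hA : 1 + 2 / t ≤ 2 / t * q := by
    have : 2 / t * q = 2 / t + 7 / 2 + 49 / 32 * t := by
      rw [hq]
      field_simp
      ring
    linarith
  refine le_of_mul_le_mul_left ?_ hq0
  calc q * x ^ 2 = ((1 + 7 / 8 * t) * x) ^ 2 := by rw [mul_pow]
    _ ≤ (w + A) ^ 2 := by gcongr
    _ ≤ (1 + t / 2) * w ^ 2 + (1 + 2 / t) * A ^ 2 := young
    _ ≤ Real.exp (-t) * q * w ^ 2 + 2 / t * q * A ^ 2 := by gcongr
    _ = q * (Real.exp (-t) * w ^ 2 + 2 / t * A ^ 2) := by ring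

lemma le_pow_mul_add_mul_of_le_mul_add {x : ℕ → ℝ} {q b : ℝ} {K : ℕ} (hq0 : 0 ≤ q) (hq1 : q ≤ 1)
    (hb : 0 ≤ b) (h : ∀ k < K, x (k + 1) ≤ q * x k + b) : x K ≤ q ^ K * x 0 + K * b := by
  induction K with
  | zero => simp
  | succ K ih =>
    calc x (K + 1) ≤ q * x K + b := h K K.lt_succ_self
      _ ≤ q * (q ^ K * x 0 + K * b) + b := by
        gcongr
        exact ih fun k hk ↦ h k (hk.trans K.lt_succ_self)
      _ = q ^ (K + 1) * x 0 + q * (K * b) + b := by ring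
      _ ≤ q ^ (K + 1) * x 0 + 1 * (K * b) + b := by gcongr
      _ = q ^ (K + 1) * x 0 + (K + 1 : ℕ) * b := by push_cast; ring

end ScalarInequalities

section TailSum

variable {E : Type*} [NormedAddCommGroup E] {n : ℕ}

/-- The sum of the squared norms of the tails `∑_{j > i} a j` of a finite sequence. For the values
`a j = g j z*` of the operators of a pass at the root, it measures the noise of that pass. -/
def tailSumSq (a : Fin n → E) : ℝ :=
  ∑ i, ‖∑ j ∈ Ioi i, a j‖ ^ 2

lemma tailSumSq_of_subsingleton [Subsingleton (Fin n)] (a : Fin n → E) : tailSumSq a = 0 := by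
  simp [tailSumSq, fun i : Fin n ↦ Ioi_eq_empty.2 (isMax_iff_forall_not_lt.2
    fun j ↦ (Subsingleton.elim i j).not_lt)]

lemma sq_sum_norm_tail_le (a : Fin n → E) :
    (∑ i, ‖∑ j ∈ Ioi i, a j‖) ^ 2 ≤ n * tailSumSq a := by
  simpa [tailSumSq] using
    sq_sum_le_card_mul_sum_sq (s := univ) (f := fun i ↦ ‖∑ j ∈ Ioi i, a j‖)

end TailSum

section ProximalPass

variable {E : Type*} [NormedAddCommGroup E]

/-- `y 0, …, y n` is one pass of the proximal point method with step size `α` through the operators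
`g 0, …, g (n - 1)`, in this order. The sequence `y` is unconstrained beyond index `n`. -/
def IsProximalPass [NormedSpace ℝ E] {n : ℕ} (g : Fin n → E → E) (α : ℝ) (y : ℕ → E) : Prop :=
  ∀ i : Fin n, y (i + 1) = y i - α • g i (y (i + 1))

lemma existsUnique_eq_sub_smul [NormedSpace ℝ E] [CompleteSpace E] {f : E → E} {l α : ℝ}
    (hα : 0 ≤ α) (hαl : α * l < 1) (hf : ∀ z₁ z₂, ‖f z₁ - f z₂‖ ≤ l * ‖z₁ - z₂‖) (z : E) :
    ∃! z' : E, z' = z - α • f z' := by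
  have hc : ContractingWith (α * l).toNNReal fun z' ↦ z - α • f z' := by
    refine ⟨by simpa using hαl, LipschitzWith.of_dist_le_mul fun x y ↦ ?_⟩
    rw [dist_eq_norm, dist_eq_norm, sub_sub_sub_cancel_left, ← smul_sub, norm_smul,
      Real.norm_of_nonneg hα, norm_sub_rev]
    calc α * ‖f x - f y‖ ≤ α * (l * ‖x - y‖) := by gcongr; exact hf x y
      _ = α * l * ‖x - y‖ := by ring
      _ ≤ (α * l).toNNReal * ‖x - y‖ := by gcongr; exact Real.le_coe_toNNReal _
  exact ⟨hc.fixedPoint, hc.fixedPoint_isFixedPt.symm, fun y hy ↦ hc.fixedPoint_unique hy.symm⟩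

namespace IsProximalPass

section NormedSpace

variable [NormedSpace ℝ E] {n : ℕ} {g : Fin n → E → E} {l α : ℝ} {y : ℕ → E} {z : E}

lemma sub_succ (hy : IsProximalPass g α y) (i : Fin n) :
    y i - y (i + 1) = α • g i (y (i + 1)) := by
  rw [sub_eq_iff_eq_add, ← sub_eq_iff_eq_add', ← hy i]

lemma sub_last_eq (hy : IsProximalPass g α y) (i : Fin n) :
    y (i + 1) - y n = α • ∑ j ∈ Ioi i, g j (y (j + 1)) := by
  rw [← sum_fin_Ioi_sub_succ y i, smul_sum]
  exact sum_congr rfl fun j _ ↦ hy.sub_succ j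

lemma zero_sub_last_eq (hy : IsProximalPass g α y) :
    y 0 - y n = α • ∑ j, g j (y (j + 1)) := by
  rw [← sum_range_sub' y n, ← Fin.sum_univ_eq_sum_range fun j ↦ y j - y (j + 1), smul_sum]
  exact sum_congr rfl fun j _ ↦ hy.sub_succ j

lemma norm_sub_last_le (hy : IsProximalPass g α y) (hl : 0 ≤ l) (hα : 0 ≤ α)
    (hlip : ∀ i w, ‖g i w - g i z‖ ≤ l * ‖w - z‖) (i : Fin n) :
    ‖y (i + 1) - y n‖ ≤ α * ‖∑ j ∈ Ioi i, g j z‖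
      + α * l * (#(Ioi i) * ‖y n - z‖ + ∑ j : Fin n, ‖y (j + 1) - y n‖) := by
  have hlipschitz : ‖∑ j ∈ Ioi i, (g j (y (j + 1)) - g j z)‖
      ≤ l * (#(Ioi i) * ‖y n - z‖ + ∑ j : Fin n, ‖y (j + 1) - y n‖) :=
    calc ‖∑ j ∈ Ioi i, (g j (y (j + 1)) - g j z)‖
        ≤ ∑ j ∈ Ioi i, l * (‖y n - z‖ + ‖y (j + 1) - y n‖) := by
          refine norm_sum_le_of_le _ fun j _ ↦ (hlip j _).trans ?_
          rw [add_comm ‖y n - z‖]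
          gcongr
          exact norm_sub_le_norm_sub_add_norm_sub _ _ _
      _ = l * (#(Ioi i) * ‖y n - z‖ + ∑ j ∈ Ioi i, ‖y (j + 1) - y n‖) := by
          rw [← mul_sum, sum_add_distrib, sum_const, nsmul_eq_mul]
      _ ≤ l * (#(Ioi i) * ‖y n - z‖ + ∑ j : Fin n, ‖y (j + 1) - y n‖) := by
          gcongr
          exact subset_univ _
  calc ‖y (i + 1) - y n‖
      = α * ‖∑ j ∈ Ioi i, g j z + ∑ j ∈ Ioi i, (g j (y (j + 1)) - g j z)‖ := by
        rw [hy.sub_last_eq, ← sum_add_distrib, norm_smul, Real.norm_of_nonneg hα]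
        simp_rw [add_sub_cancel]
    _ ≤ α * (‖∑ j ∈ Ioi i, g j z‖ + ‖∑ j ∈ Ioi i, (g j (y (j + 1)) - g j z)‖) := by
        gcongr
        exact norm_add_le _ _
    _ ≤ α * (‖∑ j ∈ Ioi i, g j z‖
        + l * (#(Ioi i) * ‖y n - z‖ + ∑ j : Fin n, ‖y (j + 1) - y n‖)) := by gcongr
    _ = _ := by ring

lemma sum_norm_sub_last_le (hy : IsProximalPass g α y) (hl : 0 ≤ l) (hα : 0 ≤ α)
    (hlip : ∀ i w, ‖g i w - g i z‖ ≤ l * ‖w - z‖) :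
    ∑ i : Fin n, ‖y (i + 1) - y n‖ ≤ α * ∑ i, ‖∑ j ∈ Ioi i, g j z‖
      + α * l * ((n : ℝ) ^ 2 / 2 * ‖y n - z‖ + n * ∑ i : Fin n, ‖y (i + 1) - y n‖) := by
  set U := ∑ i : Fin n, ‖y (i + 1) - y n‖
  calc U ≤ ∑ i : Fin n, (α * ‖∑ j ∈ Ioi i, g j z‖ + α * l * (#(Ioi i) * ‖y n - z‖ + U)) :=
        sum_le_sum fun i _ ↦ hy.norm_sub_last_le hl hα hlip i
    _ = α * ∑ i, ‖∑ j ∈ Ioi i, g j z‖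
        + α * l * ((∑ i : Fin n, (#(Ioi i) : ℝ)) * ‖y n - z‖ + n * U) := by
        rw [sum_add_distrib, ← mul_sum, ← mul_sum, sum_add_distrib, ← sum_mul, sum_const,
          card_univ, Fintype.card_fin, nsmul_eq_mul]
    _ ≤ _ := by
        gcongr
        exact sum_fin_card_Ioi_le n

end NormedSpace

section InnerProductSpace

variable [InnerProductSpace ℝ E] {n : ℕ} {g : Fin n → E → E} {c l μ α : ℝ} {y : ℕ → E} {z : E}

lemma norm_last_sub_le (hy : IsProximalPass g α y) (hl : 0 ≤ l) (hα : 0 ≤ α)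
    (hlip : ∀ i w₁ w₂, ‖g i w₁ - g i w₂‖ ≤ l * ‖w₁ - w₂‖)
    (hmono : ∀ w, c * ‖w - z‖ ^ 2 ≤ ⟪∑ i, g i w, w - z⟫) :
    (1 + α * c) * ‖y n - z‖ ≤ ‖y 0 - z‖ + α * (l * ∑ i : Fin n, ‖y (i + 1) - y n‖) := by
  set d := ‖y n - z‖ with hd
  set U := ∑ i : Fin n, ‖y (i + 1) - y n‖
  set e := ∑ j, (g j (y n) - g j (y (j + 1)))
  have he : ‖e‖ ≤ l * U := by
    rw [mul_sum]
    refine norm_sum_le_of_le _ fun j _ ↦ (hlip j _ _).trans_eq ?_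
    rw [norm_sub_rev]
  have hstep : y n - z + α • ∑ j, g j (y n) = y 0 - z + α • e := by
    simp only [e, sum_sub_distrib, smul_sub, ← hy.zero_sub_last_eq]
    abel
  have hinner : (1 + α * c) * d * d ≤ (‖y 0 - z‖ + α * (l * U)) * d :=
    calc (1 + α * c) * d * d = d ^ 2 + α * (c * d ^ 2) := by ring
      _ ≤ d ^ 2 + α * ⟪∑ j, g j (y n), y n - z⟫ := by gcongr; exact hmono _
      _ = ⟪y 0 - z + α • e, y n - z⟫ := by
        rw [← hstep, inner_add_left, real_inner_smul_left, real_inner_self_eq_norm_sq]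
      _ ≤ ‖y 0 - z + α • e‖ * d := real_inner_le_norm _ _
      _ ≤ (‖y 0 - z‖ + α * (l * U)) * d := by
        gcongr
        refine (norm_add_le _ _).trans ?_
        rw [norm_smul, Real.norm_of_nonneg hα]
        gcongr
  rcases (norm_nonneg (y n - z)).eq_or_lt with h | h
  · rw [hd, ← h, mul_zero]
    positivity
  · exact le_of_mul_le_mul_right hinner h

/-- The step-size bound makes `nαl ≤ 1 / 5` and `(nαl)² ≤ nαμ / 5`, so the drift of the iterates
costs at most an eighth of the contraction. -/
lemma norm_last_sub_le_of_step_le (hy : IsProximalPass g α y) (hα : 0 ≤ α) (hl : 0 < l)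
    (hμl : μ ≤ l) (hstep : 5 * n * l ^ 2 * α ≤ μ)
    (hlip : ∀ i w₁ w₂, ‖g i w₁ - g i w₂‖ ≤ l * ‖w₁ - w₂‖)
    (hmono : ∀ w, n * μ * ‖w - z‖ ^ 2 ≤ ⟪∑ i, g i w, w - z⟫) :
    (1 + 7 / 8 * (n * α * μ)) * ‖y n - z‖
      ≤ ‖y 0 - z‖ + 5 / 4 * (α ^ 2 * l * ∑ i, ‖∑ j ∈ Ioi i, g j z‖) := by
  have hε : n * α * l ≤ 1 / 5 :=
    le_of_mul_le_mul_right (by linarith : n * α * l * l ≤ 1 / 5 * l) hl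
  have hε2 : (n * α * l) ^ 2 ≤ n * α * μ / 5 := by
    linarith [mul_le_mul_of_nonneg_left hstep (by positivity : 0 ≤ n * α / 5)]
  have hpass := hy.norm_last_sub_le hl.le hα hlip hmono
  have hdrift := hy.sum_norm_sub_last_le hl.le hα fun i w ↦ hlip i w z
  set U := ∑ i : Fin n, ‖y (i + 1) - y n‖
  set S := ∑ i, ‖∑ j ∈ Ioi i, g j z‖
  set d := ‖y n - z‖
  have hU0 : 0 ≤ U := by positivity
  have hU : 4 / 5 * U ≤ α * S + α * l * (n ^ 2 / 2 * d) := by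
    linarith [mul_le_mul_of_nonneg_right hε hU0]
  have hlU : α * (l * U) ≤ 5 / 4 * (α ^ 2 * l * S) + n * α * μ / 8 * d :=
    calc α * (l * U) = 5 / 4 * (α * l) * (4 / 5 * U) := by ring
      _ ≤ 5 / 4 * (α * l) * (α * S + α * l * (n ^ 2 / 2 * d)) := by gcongr
      _ = 5 / 4 * (α ^ 2 * l * S) + 5 / 8 * ((n * α * l) ^ 2 * d) := by ring
      _ ≤ 5 / 4 * (α ^ 2 * l * S) + 5 / 8 * (n * α * μ / 5 * d) := by gcongr
      _ = 5 / 4 * (α ^ 2 * l * S) + n * α * μ / 8 * d := by ring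
  linarith

lemma norm_last_sub_sq_le (hy : IsProximalPass g α y) (hn : 0 < n) (hα : 0 < α) (hμ : 0 < μ)
    (hμl : μ ≤ l) (hstep : 5 * n * l ^ 2 * α ≤ μ)
    (hlip : ∀ i w₁ w₂, ‖g i w₁ - g i w₂‖ ≤ l * ‖w₁ - w₂‖)
    (hmono : ∀ w, n * μ * ‖w - z‖ ^ 2 ≤ ⟪∑ i, g i w, w - z⟫) :
    ‖y n - z‖ ^ 2 ≤ Real.exp (-(n * α * μ)) * ‖y 0 - z‖ ^ 2
      + 25 / 8 * (α ^ 3 * l ^ 2 / μ) * tailSumSq fun i ↦ g i z := by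
  have hl : 0 < l := hμ.trans_le hμl
  have ht5 : n * α * μ ≤ 1 / 5 := by
    refine le_of_mul_le_mul_right ?_ hl
    calc n * α * μ * l ≤ n * α * l * l := by gcongr
      _ ≤ 1 / 5 * l := by linarith
  refine (sq_le_exp_neg_mul_sq_add (norm_nonneg _) (by positivity) ht5
    (hy.norm_last_sub_le_of_step_le hα.le hl hμl hstep hlip hmono)).trans ?_
  gcongr _ + ?_
  set S := ∑ i, ‖∑ j ∈ Ioi i, g j z‖
  calc 2 / (n * α * μ) * (5 / 4 * (α ^ 2 * l * S)) ^ 2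
      = 25 / 8 * (α ^ 3 * l ^ 2 / μ) / n * S ^ 2 := by
        field_simp
        ring
    _ ≤ 25 / 8 * (α ^ 3 * l ^ 2 / μ) / n * (n * tailSumSq fun i ↦ g i z) := by
        gcongr
        exact sq_sum_norm_tail_le _
    _ = 25 / 8 * (α ^ 3 * l ^ 2 / μ) * tailSumSq fun i ↦ g i z := by field_simp

end InnerProductSpace

end IsProximalPass

end ProximalPass

section RandomPermutation

variable {ι : Type*} [Fintype ι] [DecidableEq ι]

lemma expect_perm_apply {M : Type*} [AddCommMonoid M] [Module ℚ≥0 M] (f : ι → M) (j : ι) :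
    𝔼 π : Equiv.Perm ι, f (π j) = 𝔼 i, f i := by
  have : Nonempty ι := ⟨j⟩
  have hswap (k : ι) : 𝔼 π : Equiv.Perm ι, f (π j) = 𝔼 π : Equiv.Perm ι, f (π k) :=
    Fintype.expect_equiv (Equiv.mulRight (Equiv.swap j k)) _ _ fun π ↦ by simp
  calc 𝔼 π : Equiv.Perm ι, f (π j) = 𝔼 k, 𝔼 π : Equiv.Perm ι, f (π k) := by
        rw [← expect_congr rfl fun k _ ↦ hswap k, Fintype.expect_const]
    _ = 𝔼 π : Equiv.Perm ι, 𝔼 i, f i := by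
        rw [expect_comm]
        exact expect_congr rfl fun π _ ↦ Fintype.expect_equiv π _ _ fun _ ↦ rfl
    _ = 𝔼 i, f i := Fintype.expect_const _

lemma expect_pi_apply {α M : Type*} [Fintype α] [Nonempty α] [AddCommMonoid M] [Module ℚ≥0 M]
    (f : α → M) (j : ι) : 𝔼 τ : ι → α, f (τ j) = 𝔼 x, f x := by
  rw [Fintype.expect_equiv (Equiv.funSplitAt j α) (fun τ ↦ f (τ j)) (fun p ↦ f p.1) fun _ ↦ rfl,
    ← univ_product_univ, expect_product]
  simp_rw [Fintype.expect_const]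

variable {E : Type*} [NormedAddCommGroup E] [InnerProductSpace ℝ E]

/-- The mean of `⟪a (π j), a (π k)⟫` over all permutations `π`. When `∑ i, a i = 0` this is the
covariance of the `j`-th and `k`-th draws when sampling the family `a` without replacement. -/
noncomputable def permCov (a : ι → E) (j k : ι) : ℝ :=
  𝔼 π : Equiv.Perm ι, ⟪a (π j), a (π k)⟫

lemma permCov_self (a : ι → E) (j : ι) : permCov a j j = 𝔼 i, ‖a i‖ ^ 2 := by
  simp_rw [permCov, real_inner_self_eq_norm_sq]
  exact expect_perm_apply (fun i ↦ ‖a i‖ ^ 2) j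

lemma permCov_perm_apply (a : ι → E) (ρ : Equiv.Perm ι) (j k : ι) :
    permCov a (ρ j) (ρ k) = permCov a j k :=
  Fintype.expect_equiv (Equiv.mulRight ρ) _ _ fun _ ↦ rfl

lemma sum_permCov {a : ι → E} (ha : ∑ i, a i = 0) (j : ι) : ∑ k, permCov a j k = 0 := by
  simp_rw [permCov]
  rw [← expect_sum_comm]
  refine expect_eq_zero fun π _ ↦ ?_
  rw [← inner_sum, Equiv.sum_comp π a, ha, inner_zero_right]

lemma permCov_of_ne {a : ι → E} (ha : ∑ i, a i = 0) {j k : ι} (hjk : j ≠ k) :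
    ((Fintype.card ι : ℝ) - 1) * permCov a j k = -𝔼 i, ‖a i‖ ^ 2 := by
  have hconst : ∀ k' ∈ univ.erase j, permCov a j k' = permCov a j k := fun k' hk' ↦ by
    have := permCov_perm_apply a (Equiv.swap k k') j k
    rwa [Equiv.swap_apply_left, Equiv.swap_apply_of_ne_of_ne hjk (ne_of_mem_erase hk').symm]
      at this
  have hrow := add_sum_erase univ (permCov a j) (mem_univ j)
  rw [sum_permCov ha, permCov_self, sum_congr rfl hconst, sum_const, nsmul_eq_mul,
    cast_card_erase_of_mem (mem_univ j), card_univ] at hrow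
  linarith

lemma sum_permCov_of_mem {a : ι → E} (ha : ∑ i, a i = 0) {T : Finset ι} {j : ι} (hj : j ∈ T) :
    ((Fintype.card ι : ℝ) - 1) * ∑ k ∈ T, permCov a j k
      = (Fintype.card ι - #T) * 𝔼 i, ‖a i‖ ^ 2 := by
  have hoff : ∀ k ∈ T.erase j,
      ((Fintype.card ι : ℝ) - 1) * permCov a j k = -𝔼 i, ‖a i‖ ^ 2 :=
    fun k hk ↦ permCov_of_ne ha (ne_of_mem_erase hk).symm
  rw [← add_sum_erase T _ hj, mul_add, mul_sum (T.erase j), sum_congr rfl hoff, sum_const,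
    nsmul_eq_mul, cast_card_erase_of_mem hj, permCov_self]
  ring

lemma expect_perm_norm_sq_sum {a : ι → E} (ha : ∑ i, a i = 0) (T : Finset ι) :
    ((Fintype.card ι : ℝ) - 1) * 𝔼 π : Equiv.Perm ι, ‖∑ j ∈ T, a (π j)‖ ^ 2
      = #T * (Fintype.card ι - #T) * 𝔼 i, ‖a i‖ ^ 2 := by
  have hexpand : 𝔼 π : Equiv.Perm ι, ‖∑ j ∈ T, a (π j)‖ ^ 2
      = ∑ j ∈ T, ∑ k ∈ T, permCov a j k := by
    simp_rw [permCov, ← expect_sum_comm, ← real_inner_self_eq_norm_sq, sum_inner, inner_sum]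
  rw [hexpand, mul_sum, sum_congr rfl fun j hj ↦ sum_permCov_of_mem ha hj, sum_const,
    nsmul_eq_mul]
  ring

lemma expect_perm_tailSumSq {n : ℕ} (hn : 2 ≤ n) {a : Fin n → E} (ha : ∑ i, a i = 0) :
    𝔼 π : Equiv.Perm (Fin n), tailSumSq (fun i ↦ a (π i))
      = n * (n + 1) / 6 * 𝔼 i, ‖a i‖ ^ 2 := by
  have hn1 : (n : ℝ) - 1 ≠ 0 := by
    have : (2 : ℝ) ≤ n := by exact_mod_cast hn
    linarith
  have htail (i : Fin n) := expect_perm_norm_sq_sum ha (Ioi i)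
  rw [Fintype.card_fin] at htail
  refine mul_left_cancel₀ hn1 ?_
  simp_rw [tailSumSq]
  rw [expect_sum_comm, mul_sum, sum_congr rfl fun i _ ↦ htail i, ← sum_mul,
    sum_fin_card_Ioi n fun k ↦ (k : ℝ) * (n - k), sum_range_mul_sub]
  ring

lemma expect_perm_tailSumSq_le {n : ℕ} {a : Fin n → E} (ha : ∑ i, a i = 0) :
    𝔼 π : Equiv.Perm (Fin n), tailSumSq (fun i ↦ a (π i))
      ≤ (n : ℝ) ^ 2 / 4 * 𝔼 i, ‖a i‖ ^ 2 := by
  rcases lt_or_ge n 2 with hn | hn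
  · have : Subsingleton (Fin n) := Fin.subsingleton_iff_le_one.2 (by lia)
    simp_rw [tailSumSq_of_subsingleton, expect_const_zero]
    positivity
  · have hn2 : (2 : ℝ) ≤ n := by exact_mod_cast hn
    rw [expect_perm_tailSumSq hn ha]
    refine mul_le_mul_of_nonneg_right ?_ (by positivity)
    nlinarith

end RandomPermutation

section RandomReshuffling

variable {E : Type*} [NormedAddCommGroup E] [InnerProductSpace ℝ E] {n K : ℕ}
  {ω : Fin n → E → E} {l μ α : ℝ} {z z₀ : E} {Z : (Fin K → Equiv.Perm (Fin n)) → ℕ → ℕ → E}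

lemma expect_reshuffling_epoch_le (hn : 0 < n) (hα : 0 < α) (hμ : 0 < μ) (hμl : μ ≤ l)
    (hstep : 5 * n * l ^ 2 * α ≤ μ) (hlip : ∀ i w₁ w₂, ‖ω i w₁ - ω i w₂‖ ≤ l * ‖w₁ - w₂‖)
    (hroot : ∑ i, ω i z = 0) (hmono : ∀ w, n * μ * ‖w - z‖ ^ 2 ≤ ⟪∑ i, ω i w, w - z⟫)
    (k : Fin K) (hpass : ∀ τ, IsProximalPass (fun i ↦ ω (τ k i)) α (Z τ k)) :
    𝔼 τ, ‖Z τ k n - z‖ ^ 2 ≤ Real.exp (-(n * α * μ)) * 𝔼 τ, ‖Z τ k 0 - z‖ ^ 2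
      + 25 / 32 * (α ^ 3 * l ^ 2 * n ^ 2 / μ * 𝔼 i, ‖ω i z‖ ^ 2) := by
  have hsum (π : Equiv.Perm (Fin n)) (w : E) : ∑ i, ω (π i) w = ∑ i, ω i w :=
    Equiv.sum_comp π fun i ↦ ω i w
  have hepoch τ := (hpass τ).norm_last_sub_sq_le hn hα hμ hμl hstep (fun i ↦ hlip (τ k i))
    fun w ↦ by rw [hsum]; exact hmono w
  have hnoise : 𝔼 τ : Fin K → Equiv.Perm (Fin n), tailSumSq (fun i ↦ ω (τ k i) z)
      ≤ (n : ℝ) ^ 2 / 4 * 𝔼 i, ‖ω i z‖ ^ 2 := by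
    rw [expect_pi_apply fun π : Equiv.Perm (Fin n) ↦ tailSumSq fun i ↦ ω (π i) z]
    exact expect_perm_tailSumSq_le (a := fun i ↦ ω i z) hroot
  calc 𝔼 τ, ‖Z τ k n - z‖ ^ 2
      ≤ 𝔼 τ, (Real.exp (-(n * α * μ)) * ‖Z τ k 0 - z‖ ^ 2
          + 25 / 8 * (α ^ 3 * l ^ 2 / μ) * tailSumSq fun i ↦ ω (τ k i) z) :=
        expect_le_expect fun τ _ ↦ hepoch τ
    _ = Real.exp (-(n * α * μ)) * 𝔼 τ, ‖Z τ k 0 - z‖ ^ 2 + 25 / 8 * (α ^ 3 * l ^ 2 / μ)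
          * 𝔼 τ : Fin K → Equiv.Perm (Fin n), tailSumSq fun i ↦ ω (τ k i) z := by
        rw [expect_add_distrib, ← mul_expect, ← mul_expect]
    _ ≤ Real.exp (-(n * α * μ)) * 𝔼 τ, ‖Z τ k 0 - z‖ ^ 2
          + 25 / 8 * (α ^ 3 * l ^ 2 / μ) * ((n : ℝ) ^ 2 / 4 * 𝔼 i, ‖ω i z‖ ^ 2) := by
        gcongr
    _ = _ := by ring

theorem expect_reshuffling_le (hn : 0 < n) (hα : 0 < α) (hμ : 0 < μ) (hμl : μ ≤ l)
    (hstep : 5 * n * l ^ 2 * α ≤ μ) (hlip : ∀ i w₁ w₂, ‖ω i w₁ - ω i w₂‖ ≤ l * ‖w₁ - w₂‖)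
    (hroot : ∑ i, ω i z = 0) (hmono : ∀ w, n * μ * ‖w - z‖ ^ 2 ≤ ⟪∑ i, ω i w, w - z⟫)
    (hZ0 : ∀ τ, Z τ 0 0 = z₀) (hZepoch : ∀ τ k, Z τ (k + 1) 0 = Z τ k n)
    (hpass : ∀ τ (k : Fin K), IsProximalPass (fun i ↦ ω (τ k i)) α (Z τ k)) :
    𝔼 τ, ‖Z τ K 0 - z‖ ^ 2 ≤ Real.exp (-(n * α * μ * K)) * ‖z₀ - z‖ ^ 2
      + 25 / 32 * (l ^ 2 * (𝔼 i, ‖ω i z‖ ^ 2) * α ^ 3 * n ^ 2 * K / μ) := by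
  have hrec := le_pow_mul_add_mul_of_le_mul_add (x := fun k ↦ 𝔼 τ, ‖Z τ k 0 - z‖ ^ 2)
    (q := Real.exp (-(n * α * μ)))
    (b := 25 / 32 * (α ^ 3 * l ^ 2 * n ^ 2 / μ * 𝔼 i, ‖ω i z‖ ^ 2)) (K := K)
    (Real.exp_pos _).le (Real.exp_le_one_iff.2 (neg_nonpos.2 (by positivity))) (by positivity)
    fun k hk ↦ by
      simp_rw [hZepoch]
      exact expect_reshuffling_epoch_le hn hα hμ hμl hstep hlip hroot hmono ⟨k, hk⟩
        fun τ ↦ hpass τ ⟨k, hk⟩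
  simp_rw [hZ0, Fintype.expect_const, ← Real.exp_nat_mul] at hrec
  convert hrec using 2
  · ring_nf
  · ring

end RandomReshuffling

end

theorem stmt_13_general
    {E : Type*} [NormedAddCommGroup E] [InnerProductSpace ℝ E] [CompleteSpace E]
    (n : ℕ) (hn : 1 ≤ n) (ω : Fin n → E → E) (l μ : ℝ) (hμ : 0 < μ) (hμl : μ ≤ l)
    (hlip : ∀ (i : Fin n) (z₁ z₂ : E), ‖ω i z₁ - ω i z₂‖ ≤ l * ‖z₁ - z₂‖)
    (ν : E → E) (hν : ∀ z, ν z = (n : ℝ)⁻¹ • ∑ i, ω i z)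
    (zs : E) (hzs : ν zs = 0) (hmono : ∀ z, μ * ‖z - zs‖ ^ 2 ≤ ⟪ν z, z - zs⟫)
    (σ2 : ℝ) (hσ2 : σ2 = (n : ℝ)⁻¹ * ∑ i, ‖ω i zs‖ ^ 2)
    (z0 : E) (K : ℕ) (α : ℝ) (hα0 : 0 < α) (hα : α ≤ μ / (5 * n * l ^ 2)) :
    (∀ (i : Fin n) (z : E), ∃! z' : E, z' = z - α • ω i z') ∧
    ∀ Z : (Fin K → Equiv.Perm (Fin n)) → ℕ → ℕ → E,
      (∀ τ, Z τ 0 0 = z0) →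
      (∀ τ k, Z τ (k + 1) 0 = Z τ k n) →
      (∀ τ k i (hk : k < K) (hi : i < n),
        Z τ k (i + 1) = Z τ k i - α • ω ((τ ⟨k, hk⟩) ⟨i, hi⟩) (Z τ k (i + 1))) →
      ((n.factorial : ℝ) ^ K)⁻¹ * ∑ τ : Fin K → Equiv.Perm (Fin n), ‖Z τ K 0 - zs‖ ^ 2
        ≤ Real.exp (-((n : ℝ) * α * μ * K)) * ‖z0 - zs‖ ^ 2 +
            l ^ 2 * σ2 * α ^ 3 * (n : ℝ) ^ 2 * K / μ := by
  have hl : 0 < l := hμ.trans_le hμl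
  have hn1 : (1 : ℝ) ≤ n := by exact_mod_cast hn
  have hn0 : (0 : ℝ) < n := one_pos.trans_le hn1
  have hstep : 5 * n * l ^ 2 * α ≤ μ := by
    rwa [le_div_iff₀' (by positivity)] at hα
  have hαl : α * l < 1 := by
    refine lt_of_mul_lt_mul_right ?_ hl.le
    linarith [le_mul_of_one_le_right (by positivity : 0 ≤ l ^ 2 * α) hn1]
  have hsum (z : E) : ∑ i, ω i z = (n : ℝ) • ν z := by rw [hν, smul_inv_smul₀ hn0.ne']
  have hmono' (z : E) : n * μ * ‖z - zs‖ ^ 2 ≤ ⟪∑ i, ω i z, z - zs⟫ := by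
    rw [hsum, real_inner_smul_left, mul_assoc]
    gcongr
    exact hmono z
  have hσ : Finset.univ.expect (fun i ↦ ‖ω i zs‖ ^ 2) = σ2 := by
    rw [hσ2, Fintype.expect_eq_sum_div_card, Fintype.card_fin, div_eq_inv_mul]
  have hσ0 : 0 ≤ σ2 := by rw [hσ2]; positivity
  refine ⟨fun i ↦ existsUnique_eq_sub_smul hα0.le hαl (hlip i), fun Z hZ0 hZepoch hZstep ↦ ?_⟩
  have hmean := expect_reshuffling_le hn hα0 hμ hμl hstep hlip (by rw [hsum, hzs, smul_zero])
    hmono' hZ0 hZepoch fun τ k i ↦ hZstep τ k i k.isLt i.isLt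
  rw [Fintype.expect_eq_sum_div_card, hσ, div_eq_inv_mul] at hmean
  simp only [Fintype.card_pi, Fintype.card_perm, Fintype.card_fin, Finset.prod_const,
    Finset.card_univ, Nat.cast_pow] at hmean
  refine hmean.trans ?_
  have : 0 ≤ l ^ 2 * σ2 * α ^ 3 * n ^ 2 * K / μ := by positivity
  linarith

/-- Proximal point method with Random Reshuffling: the implicit updates are well defined
(each `z′ = z − α·ωᵢ(z′)` has a unique solution), and for any assignment `Z` of
trajectories satisfying the PPM-without-replacement recurrences (epochs `k = 0,…,K−1`,
steps `i = 0,…,n−1`, `Z τ k i = zᵏ⁺¹ᵢ`), averaging over all `(n!)^K` tuples of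
permutations gives
`E‖z^{K+1}₀ − z*‖² ≤ 2e^{−nαμK}‖z₀ − z*‖² + l²σ*²α³n²K/μ`. -/
theorem stmt_13
    {E : Type*} [NormedAddCommGroup E] [InnerProductSpace ℝ E] [FiniteDimensional ℝ E]
    (n : ℕ) (hn : 1 ≤ n) (ω : Fin n → E → E) (l μ : ℝ) (hμ : 0 < μ) (hμl : μ ≤ l)
    (hlip : ∀ (i : Fin n) (z₁ z₂ : E), ‖ω i z₁ - ω i z₂‖ ≤ l * ‖z₁ - z₂‖)
    (ν : E → E) (hν : ∀ z, ν z = (n : ℝ)⁻¹ • ∑ i, ω i z)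
    (hmono : ∀ z₁ z₂, ⟪ν z₁ - ν z₂, z₁ - z₂⟫ ≥ μ * ‖z₁ - z₂‖ ^ 2)
    (zs : E) (hzs : ν zs = 0)
    (σ2 : ℝ) (hσ2 : σ2 = (n : ℝ)⁻¹ * ∑ i, ‖ω i zs‖ ^ 2)
    (z0 : E) (K : ℕ) (hK : 1 ≤ K) (α : ℝ) (hα0 : 0 < α) (hα : α ≤ μ / (5 * n * l ^ 2)) :
    (∀ (i : Fin n) (z : E), ∃! z' : E, z' = z - α • ω i z') ∧
    ∀ Z : (Fin K → Equiv.Perm (Fin n)) → ℕ → ℕ → E,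
      (∀ τ, Z τ 0 0 = z0) →
      (∀ τ k, Z τ (k + 1) 0 = Z τ k n) →
      (∀ τ k i (hk : k < K) (hi : i < n),
        Z τ k (i + 1) = Z τ k i - α • ω ((τ ⟨k, hk⟩) ⟨i, hi⟩) (Z τ k (i + 1))) →
      ((n.factorial : ℝ) ^ K)⁻¹ * ∑ τ : Fin K → Equiv.Perm (Fin n), ‖Z τ K 0 - zs‖ ^ 2
        ≤ 2 * Real.exp (-((n : ℝ) * α * μ * K)) * ‖z0 - zs‖ ^ 2 +
            l ^ 2 * σ2 * α ^ 3 * (n : ℝ) ^ 2 * K / μ := by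
  have hgeneral := stmt_13_general n hn ω l μ hμ hμl hlip ν hν zs hzs
    (fun z ↦ by simpa [hzs] using hmono z zs) σ2 hσ2 z0 K α hα0 hα
  refine ⟨hgeneral.1, fun Z hZ0 hZepoch hZstep ↦ (hgeneral.2 Z hZ0 hZepoch hZstep).trans ?_⟩
  gcongr
  exact le_mul_of_one_le_left (Real.exp_pos _).le one_le_two
end
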